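/- For every integer k ≥ 2 there exist a constant ε > 0 and positive integers n_0, m_0 such that for all n ≥ n_0 and m ≥ m_0 there exist binary relational structures A_n and B_m over a common vocabulary with |V(A_n)| = n and |V(B_m)| = m such that Spoiler has a winning strategy in the existential k-pebble game on A_n and B_m, but Spoiler has no strategy that wins within fewer than ε · n^(k−1) · m^(k−1) rounds. -/

import Mathlib

/-- A relational structure over the vocabulary `ι` (a type of relation symbols)
with universe `V`: each relation symbol is interpreted as a set of tuples
(lists) over `V`. -/
structure RelStruct (ι V : Type) where
  rel : ι → List V → Prop

namespace CSP

variable {ι α β : Type}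

/-- A finite set of pairs is a partial map if it is functional. -/
def Functional (p : Finset (α × β)) : Prop :=
  ∀ ⦃x : α⦄ ⦃y y' : β⦄, (x, y) ∈ p → (x, y') ∈ p → y = y'

/-- `p` is a partial homomorphism from `A` to `B`: it is a partial map, and every
tuple of elements of its domain that belongs to a relation of `A` is mapped
coordinatewise to a tuple of the corresponding relation of `B`. -/
def PartialHom (A : RelStruct ι α) (B : RelStruct ι β) (p : Finset (α × β)) : Prop :=
  Functional p ∧
  ∀ (R : ι) (t : List α) (t' : List β),
    List.Forall₂ (fun x y => (x, y) ∈ p) t t' → A.rel R t → B.rel R t'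

/-- A structure is binary if all of its relations consist of tuples of arity at most 2. -/
def Binary (A : RelStruct ι α) : Prop := ∀ R t, A.rel R t → t.length ≤ 2

/-- `Deriv A B w p d` holds iff the partial map `p` has a CSP-derivation of width at
most `w` and depth at most `d`: axioms are the partial maps that are not partial
homomorphisms (of any depth), and a non-axiom line `p` with `|p| ≤ w` may be derived
from the premises `p'_b ∪ {x ↦ b}` (for all `b ∈ V(B)`), where each `p'_b ⊆ p`,
increasing the depth by one. -/
inductive Deriv [DecidableEq α] [DecidableEq β]
    (A : RelStruct ι α) (B : RelStruct ι β) (w : ℕ) :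
    Finset (α × β) → ℕ → Prop
  | ax {p : Finset (α × β)} {d : ℕ} :
      Functional p → ¬ PartialHom A B p → Deriv A B w p d
  | rule {p : Finset (α × β)} {d : ℕ} (x : α) (prem : β → Finset (α × β)) :
      Functional p → p.card ≤ w →
      (∀ b : β, prem b ⊆ p) →
      (∀ b : β, Deriv A B w (insert (x, b) (prem b)) d) →
      Deriv A B w p (d + 1)

end CSP

namespace CSP

variable {ι α β : Type}

/-- `SpoilerWin A B k p d`: Spoiler has a strategy to win the existential `k`-pebble game
on `A` and `B` within `d` rounds (pebble placements), starting from position `p`.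
Either the current position is already not a partial homomorphism, or Spoiler picks up
some pebbles (keeping `p' ⊆ p` with `|p'| < k`), places a free pebble on some `x ∈ V(A)`,
and wins within the remaining rounds against every answer `b ∈ V(B)` of Duplicator. -/
inductive SpoilerWin [DecidableEq α] [DecidableEq β]
    (A : RelStruct ι α) (B : RelStruct ι β) (k : ℕ) :
    Finset (α × β) → ℕ → Prop
  | win {p : Finset (α × β)} {d : ℕ} :
      ¬ PartialHom A B p → SpoilerWin A B k p d
  | move {p : Finset (α × β)} {d : ℕ} (p' : Finset (α × β)) (x : α) :
      p' ⊆ p → p'.card < k →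
      (∀ b : β, SpoilerWin A B k (insert (x, b) p') d) →
      SpoilerWin A B k p (d + 1)

end CSP

/-!
Write `k = L + 2`. Spoiler counts with `L + 1` pebbles, one for each digit of a counter, and uses
the last pebble to advance it. A digit has `2 * q * m` values and is shown by a single pebble
pair: the pebbled element, one of order `n`, carries the residue modulo `2 * q`, and Duplicator's
answer, one of order `m`, carries the quotient. Binary constraints let digit `u` advance by one
only while digit `u - 1` reads `0` or `q * m`, alternately, and forbid the leading digit to
overflow. So Spoiler wins by counting up, but two advances of a digit cost a full revolution of the
digit below it, and an overflow takes at least `(q * m) ^ L * (2 * q * m)` rounds.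

Duplicator must follow the counter only as long as all of its digits are on the board, for
otherwise she escapes by blaming a missing digit. The danger is that Spoiler resets some digits to
`0` and keeps the others. Therefore a digit is set to `0` only under an assignment of bits to
`L + 1` seeds that Duplicator hides: as long as some digit is neither fixed by a seed on the board
nor `0` under this assignment, she may claim that its seed disagrees. Once she cannot, all pebbles
are engaged and no other marker survives.

The sizes are adjusted to exactly `n` and `m` by pulling the structures back along surjections,
which replace elements by several copies and do not affect the game.
-/

theorem injOn_and_ne_none_of_card_le {E κ : Type*} [Fintype κ] {s : Finset E} {f : E → Option κ}
    (hs : s.card ≤ Fintype.card κ) (hf : ∀ i, ∃ e ∈ s, f e = some i) :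
    Set.InjOn f s ∧ ∀ e ∈ s, f e ≠ none := by
  classical
  have hsub : Finset.univ.image some ⊆ s.image f := by
    simpa [Finset.image_subset_iff] using hf
  have hcard : (Finset.univ.image (some : κ → Option κ)).card = Fintype.card κ :=
    Finset.card_image_of_injective _ (Option.some_injective κ)
  have himage : Finset.univ.image some = s.image f :=
    Finset.eq_of_subset_of_card_le hsub (by rw [hcard]; exact Finset.card_image_le.trans hs)
  refine ⟨Finset.card_image_iff.1 ?_, fun e he hnone => ?_⟩
  · exact Finset.card_image_le.antisymm (by rwa [← himage, hcard])
  · have := himage ▸ Finset.mem_image_of_mem f he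
    simp [hnone] at this

theorem exists_mul_add_modEq {b m l c : ℕ} [NeZero m] (hl : l < b) (h : l ≡ c [MOD b]) :
    ∃ a : Fin m, b * a + l ≡ c [MOD b * m] := by
  refine ⟨Fin.ofNat m (c / b), ?_⟩
  rw [Fin.val_ofNat, ← Nat.mod_eq_of_lt hl, h, add_comm, ← Nat.mod_mul]
  exact Nat.mod_modEq _ _

namespace RelStruct

variable {ι V W : Type}

/-- The inverse image of a structure under a map of universes: a tuple is related iff its image
is, so that each element of `W` is replaced by its whole fibre. -/
def comap (f : V → W) (A : RelStruct ι W) : RelStruct ι V := ⟨fun R t => A.rel R (t.map f)⟩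

end RelStruct

namespace CSP

variable {ι α β γ δ : Type}

theorem Binary.comap {A : RelStruct ι α} (hA : Binary A) (f : γ → α) : Binary (A.comap f) :=
  fun R t ht => by simpa using hA R _ ht

theorem Functional.mono {p p' : Finset (α × β)} (hp : Functional p) (hs : p' ⊆ p) :
    Functional p' :=
  fun _ _ _ h h' => hp (hs h) (hs h')

theorem Functional.insert [DecidableEq α] [DecidableEq β] {p : Finset (α × β)}
    (hp : Functional p) {x : α} (hx : ∀ b, (x, b) ∉ p) (b : β) : Functional (insert (x, b) p) := by
  intro y c c' h h'
  simp only [Finset.mem_insert, Prod.mk.injEq] at h h'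
  rcases h with ⟨rfl, rfl⟩ | h <;> rcases h' with ⟨h₁, rfl⟩ | h'
  · rfl
  · exact absurd h' (hx _)
  · exact absurd (h₁ ▸ h) (hx _)
  · exact hp h h'

theorem PartialHom.mono {A : RelStruct ι α} {B : RelStruct ι β} {p p' : Finset (α × β)}
    (hp : PartialHom A B p) (hs : p' ⊆ p) : PartialHom A B p' :=
  ⟨hp.1.mono hs, fun R t t' ht => hp.2 R t t' (ht.imp fun _ _ h => hs h)⟩

theorem SpoilerWin.mono [DecidableEq α] [DecidableEq β] {A : RelStruct ι α} {B : RelStruct ι β}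
    {k d d' : ℕ} {p : Finset (α × β)} (h : SpoilerWin A B k p d) (hd : d ≤ d') :
    SpoilerWin A B k p d' := by
  induction h generalizing d' with
  | win h => exact .win h
  | move p' x hs hk _ ih =>
    obtain ⟨d', rfl⟩ := Nat.exists_eq_add_one_of_ne_zero (Nat.ne_zero_of_lt hd)
    exact .move p' x hs hk fun b => ih b (Nat.le_of_succ_le_succ hd)

/-- Spoiler has a winning strategy from position `p`: he wins within some finite number of
rounds. -/
def SpoilerWins [DecidableEq α] [DecidableEq β] (A : RelStruct ι α) (B : RelStruct ι β) (k : ℕ)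
    (p : Finset (α × β)) : Prop :=
  ∃ d, SpoilerWin A B k p d

theorem SpoilerWins.of_forall_insert [DecidableEq α] [DecidableEq β] [Finite β]
    {A : RelStruct ι α} {B : RelStruct ι β} {k : ℕ} {p p' : Finset (α × β)} (hs : p' ⊆ p)
    (hk : p'.card < k) (x : α) (h : ∀ b, SpoilerWins A B k (insert (x, b) p')) :
    SpoilerWins A B k p := by
  choose d hd using h
  obtain ⟨D, hD⟩ := Finite.bddAbove_range d
  exact ⟨D + 1, .move p' x hs hk fun b => (hd b).mono (hD ⟨b, rfl⟩)⟩

/-- Spoiler first picks up the pebbles outside the family `e`. -/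
theorem SpoilerWins.of_family [DecidableEq α] [DecidableEq β] [Finite β] {κ : Type} [Fintype κ]
    {A : RelStruct ι α} {B : RelStruct ι β} {k : ℕ} {p : Finset (α × β)} (e : κ → α × β)
    (he : ∀ i, e i ∈ p) (hk : Fintype.card κ < k) (x : α)
    (h : ∀ b p', PartialHom A B p' → (∀ i, e i ∈ p') → (x, b) ∈ p' → SpoilerWins A B k p') :
    SpoilerWins A B k p := by
  refine .of_forall_insert (p' := Finset.univ.image e) (by simpa [Finset.image_subset_iff])
    (Finset.card_image_le.trans_lt hk) x fun b => ?_
  by_cases hp : PartialHom A B (insert (x, b) (Finset.univ.image e))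
  · exact h b _ hp (fun i => by simp) (by simp)
  · exact ⟨0, .win hp⟩

theorem not_spoilerWin_of_safe [DecidableEq α] [DecidableEq β] {A : RelStruct ι α}
    {B : RelStruct ι β} {k : ℕ} {Safe : ℕ → Finset (α × β) → Prop}
    (hom : ∀ {t p}, Safe t p → PartialHom A B p)
    (answer : ∀ {t p p'} x, Safe (t + 1) p → p' ⊆ p → p'.card < k →
      ∃ b, Safe t (insert (x, b) p'))
    {t : ℕ} {p : Finset (α × β)} (hp : Safe t p) : ¬ SpoilerWin A B k p t := by
  intro h
  induction h with
  | win h => exact h (hom hp)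
  | move p' x hs hk _ ih =>
    obtain ⟨b, hb⟩ := answer x hp hs hk
    exact ih b hb

section Comap

variable [DecidableEq α] [DecidableEq β] {A : RelStruct ι α} {B : RelStruct ι β} {f : γ → α}
  {g : δ → β} {p : Finset (γ × δ)}

theorem exists_forall₂_of_forall₂_mem_image {t : List α} {t' : List β}
    (h : List.Forall₂ (fun x y => (x, y) ∈ p.image (Prod.map f g)) t t') :
    ∃ s s', s.map f = t ∧ s'.map g = t' ∧ List.Forall₂ (fun x y => (x, y) ∈ p) s s' := by
  induction h with
  | nil => exact ⟨[], [], rfl, rfl, .nil⟩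
  | cons h _ ih =>
    obtain ⟨⟨x, y⟩, hxy, he⟩ := Finset.mem_image.1 h
    obtain ⟨s, s', rfl, rfl, hs⟩ := ih
    cases he
    exact ⟨x :: s, y :: s', rfl, rfl, .cons hxy hs⟩

/-- Functionality of the image is the only difficulty: distinct elements of a fibre of `f` may be
sent to different values, which `hfun` lets a relation detect. -/
theorem PartialHom.image_of_comap
    (hfun : ∀ x b b', (∀ R, A.rel R [x, x] → B.rel R [b, b']) → b = b')
    (hp : PartialHom (A.comap f) (B.comap g) p) : PartialHom A B (p.image (Prod.map f g)) := by
  have hrel : ∀ R t t', List.Forall₂ (fun x y => (x, y) ∈ p.image (Prod.map f g)) t t' →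
      A.rel R t → B.rel R t' := by
    intro R t t' ht hA
    obtain ⟨s, s', rfl, rfl, hs⟩ := exists_forall₂_of_forall₂_mem_image ht
    exact hp.2 R s s' hs hA
  exact ⟨fun x b b' h h' => hfun x b b' fun R hR => hrel R _ _ (.cons h (.cons h' .nil)) hR, hrel⟩

theorem PartialHom.comap_of_image (hg : Set.InjOn g (Prod.snd '' (p : Set (γ × δ))))
    (hp : PartialHom A B (p.image (Prod.map f g))) : PartialHom (A.comap f) (B.comap g) p := by
  have hmem : ∀ {x y}, (x, y) ∈ p → (f x, g y) ∈ p.image (Prod.map f g) :=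
    fun h => Finset.mem_image_of_mem (Prod.map f g) h
  refine ⟨fun x y y' h h' => hg ⟨_, h, rfl⟩ ⟨_, h', rfl⟩ (hp.1 (hmem h) (hmem h')), ?_⟩
  intro R t t' ht hA
  refine hp.2 R _ _ ?_ hA
  rw [List.forall₂_map_left_iff, List.forall₂_map_right_iff]
  exact ht.imp fun _ _ => hmem

variable [DecidableEq γ] [DecidableEq δ] {k d : ℕ}

theorem SpoilerWin.comap
    (hfun : ∀ x b b', (∀ R, A.rel R [x, x] → B.rel R [b, b']) → b = b')
    (hf : f.Surjective) {p₀ : Finset (α × β)} (h : SpoilerWin A B k p₀ d)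
    (hp : p₀ ⊆ p.image (Prod.map f g)) : SpoilerWin (A.comap f) (B.comap g) k p d := by
  induction h generalizing p with
  | win h => exact .win fun hom => h ((hom.image_of_comap hfun).mono hp)
  | @move _ _ p₀' x hs hk _ ih =>
    obtain ⟨p', hp', hinj, himg⟩ := Finset.exists_subset_injOn_image_eq_of_surjOn
      (f := Prod.map f g) (p : Set (γ × δ)) p₀' fun e he => by simpa using hp (hs he)
    obtain ⟨y, rfl⟩ := hf x
    refine .move p' y (Finset.coe_subset.1 hp') ?_ fun b => ih (g b) ?_
    · rwa [← Finset.card_image_of_injOn hinj, himg]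
    · rw [Finset.image_insert, himg]
      rfl

/-- Duplicator's answers `b` in the original game are played as `s b`, so only values in the range
of `s` occur in `p`. -/
theorem SpoilerWin.image_of_comap {s : β → δ} (hs : Function.LeftInverse g s)
    (h : SpoilerWin (A.comap f) (B.comap g) k p d) (hp : ∀ e ∈ p, e.2 ∈ Set.range s) :
    SpoilerWin A B k (p.image (Prod.map f g)) d := by
  induction h with
  | win h =>
    refine .win fun hom => h (hom.comap_of_image ?_)
    refine (hs.rightInvOn_range.injOn).mono ?_
    rintro _ ⟨e, he, rfl⟩
    exact hp e he
  | move p' x hsub hk _ ih =>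
    refine .move (p'.image (Prod.map f g)) (f x) (Finset.image_subset_image hsub)
      (Finset.card_image_le.trans_lt hk) fun b => ?_
    have himg := ih (s b) <| (Finset.forall_mem_insert ..).2 ⟨⟨b, rfl⟩, fun e he => hp e (hsub he)⟩
    rwa [Finset.image_insert, Prod.map_apply, hs b] at himg

theorem spoilerWin_comap_iff
    (hfun : ∀ x b b', (∀ R, A.rel R [x, x] → B.rel R [b, b']) → b = b')
    (hf : f.Surjective) (hg : g.Surjective) :
    SpoilerWin (A.comap f) (B.comap g) k ∅ d ↔ SpoilerWin A B k ∅ d := by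
  refine ⟨fun h => ?_, fun h => h.comap hfun hf (Finset.empty_subset _)⟩
  simpa using h.image_of_comap (Function.rightInverse_surjInv hg) (by simp)

end Comap

/-- The structure in which every ordered pair of elements is related by a symbol of its own. -/
def allPairs (α : Type) : RelStruct (α × α) α := ⟨fun R t => t = [R.1, R.2]⟩

/-- The target of the binary constraint network with variables `α`, values `β` and forbidden pairs
of assignments `excl`; its source is `allPairs α`. A unary constraint on `(x, b)` is expressed by
`(x, b)` excluding itself. -/
def constraintStructure (excl : α × β → α × β → Prop) : RelStruct (α × α) β :=
  ⟨fun R t => ∃ b c, t = [b, c] ∧ (R.1 = R.2 → b = c) ∧ ¬ excl (R.1, b) (R.2, c)⟩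

theorem binary_allPairs : Binary (allPairs α) := by
  rintro R t rfl
  simp

theorem binary_constraintStructure (excl : α × β → α × β → Prop) :
    Binary (constraintStructure excl) := by
  rintro R t ⟨b, c, rfl, -⟩
  simp

variable {excl : α × β → α × β → Prop} {p : Finset (α × β)}

theorem constraintStructure_separates (x : α) (b b' : β)
    (h : ∀ R, (allPairs α).rel R [x, x] → (constraintStructure excl).rel R [b, b']) : b = b' := by
  obtain ⟨c, c', hc, heq, -⟩ := h (x, x) rfl
  cases hc
  exact heq rfl

theorem partialHom_constraintStructure_iff :
    PartialHom (allPairs α) (constraintStructure excl) p ↔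
      Functional p ∧ ∀ e ∈ p, ∀ e' ∈ p, ¬ excl e e' := by
  refine ⟨fun hp => ⟨hp.1, ?_⟩, fun ⟨hfun, hexcl⟩ => ⟨hfun, ?_⟩⟩
  · rintro ⟨x, b⟩ he ⟨y, c⟩ he'
    obtain ⟨b', c', hbc, -, h⟩ := hp.2 (x, y) [x, y] [b, c] (.cons he (.cons he' .nil)) rfl
    cases hbc
    exact h
  · rintro ⟨x, y⟩ t t' ht rfl
    obtain - | ⟨hx, - | ⟨hy, ⟨⟩⟩⟩ := ht
    exact ⟨_, _, rfl, fun h => hfun hx (h ▸ hy), hexcl _ hx _ hy⟩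

theorem partialHom_constraintStructure_insert [DecidableEq α] [DecidableEq β] {x : α} {b : β}
    (hp : PartialHom (allPairs α) (constraintStructure excl) p) (hx : ∀ c, (x, c) ∉ p)
    (hself : ¬ excl (x, b) (x, b)) (hnew : ∀ e ∈ p, ¬ excl (x, b) e ∧ ¬ excl e (x, b)) :
    PartialHom (allPairs α) (constraintStructure excl) (insert (x, b) p) := by
  rw [partialHom_constraintStructure_iff] at hp ⊢
  refine ⟨hp.1.insert hx b, ?_⟩
  simp only [Finset.forall_mem_insert]
  exact ⟨⟨hself, fun e he => (hnew e he).1⟩, fun e he => ⟨(hnew e he).2, hp.2 e he⟩⟩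

namespace CounterGame

open Function

variable {L q m : ℕ}

/-- The variables on which Spoiler counts. The counter has digits `0, …, L`, each of them a residue
modulo `2 * q * m`; the value of digit `u` is shown by a pebble on `count u l`, where `l` is its
residue modulo `2 * q`. A counter equal to `0` is set up through the variables `seed i`, whose bits
`σ` Duplicator chooses, and `zero u σ`. -/
inductive Var (L q : ℕ)
  | seed (i : Fin (L + 1))
  | zero (u : Fin (L + 1)) (σ : Fin (L + 1) → Bool)
  | count (u : Fin (L + 1)) (l : Fin (2 * q))
  deriving DecidableEq, Fintype

/-- Duplicator's answers: a bit for `seed`, or `true` for `zero`; for `count u l`, the quotient by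
`2 * q` of the displayed residue; and `esc j`, by which Duplicator escapes the question, blaming
digit `j`. -/
inductive Val (L m : ℕ)
  | bit (b : Bool)
  | esc (j : Fin (L + 1))
  | num (a : Fin m)
  deriving DecidableEq, Fintype

theorem card_var_le :
    Fintype.card (Var L q) ≤ (L + 1) + (L + 1) * 2 ^ (L + 1) + (L + 1) * (2 * q) := by
  refine (Fintype.card_le_of_surjective
    (Sum.elim (Sum.elim .seed (uncurry .zero)) (uncurry .count)) ?_).trans (by simp)
  rintro (i | ⟨u, σ⟩ | ⟨u, l⟩)
  exacts [⟨.inl (.inl i), rfl⟩, ⟨.inl (.inr (u, σ)), rfl⟩, ⟨.inr (u, l), rfl⟩]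

theorem card_val_le : Fintype.card (Val L m) ≤ 2 + (L + 1) + m := by
  refine (Fintype.card_le_of_surjective (Sum.elim (Sum.elim .bit .esc) .num) ?_).trans (by simp)
  rintro (b | j | a)
  exacts [⟨.inl (.inl b), rfl⟩, ⟨.inl (.inr j), rfl⟩, ⟨.inr a, rfl⟩]

/-- A pebble pair. -/
abbrev Pebble (L q m : ℕ) : Type := Var L q × Val L m

/-- The digit shown by a pebble pair and its value there, if the pair is a marker of a digit. -/
def reading : Pebble L q m → Option (Fin (L + 1) × ℕ)
  | (.zero u _, .bit _) => some (u, 0)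
  | (.count u l, .num a) => some (u, 2 * q * a + l)
  | _ => none

/-- The constraints: `Excludes e e'` if the pairs `e` and `e'` may not lie on the board together.
Digit `u` may advance past `d` only to `d + 1`, and only while digit `u - 1` reads
`q * m * (d + 1)`, that is `0` or `q * m` according to the parity of `d + 1`; an overflow of the
leading digit is forbidden. An escape that blames digit `j` is excluded by a marker of digit `j`
which gives no reason for it; on `zero`, a seed that agrees with the assignment does the same.
Ill-typed pairs exclude themselves. -/
def Excludes (e : Pebble L q m) : Pebble L q m → Prop
  | (.seed _, .bit _) => False
  | (.zero _ _, .bit b) => b = false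
  | (.zero _ σ, .esc i) => e = (.seed i, .bit (σ i)) ∨ e = (.zero i σ, .bit true)
  | (.count u l, .esc j) => ∃ d, reading e = some (j, d) ∧ (j = u → l ≡ d + 1 [MOD 2 * q]) ∧
      (j.val + 1 = u → d ≡ q * m * l [MOD 2 * q * m])
  | (.count u l, .num a) => ∃ d, reading e = some (u, d) ∧ l ≡ d + 1 [MOD 2 * q] ∧
      (2 * q * a + l ≡ d + 1 [MOD 2 * q * m] → u = Fin.last L ∧ 2 * q * m ∣ d + 1)
  | _ => True

/-- The structure on whose elements Spoiler places his pebbles in the counter game. -/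
abbrev source (L q : ℕ) : RelStruct (Var L q × Var L q) (Var L q) := allPairs (Var L q)

/-- The structure from whose elements Duplicator chooses her answers in the counter game. -/
abbrev target (L q m : ℕ) : RelStruct (Var L q × Var L q) (Val L m) := constraintStructure Excludes

/-- The positions of the counter game that are not yet won by Spoiler. -/
abbrev Consistent (p : Finset (Pebble L q m)) : Prop := PartialHom (source L q) (target L q m) p

theorem Consistent.not_excludes {p : Finset (Pebble L q m)} (hp : Consistent p) {e e'}
    (he : e ∈ p) (he' : e' ∈ p) : ¬ Excludes e e' :=
  (partialHom_constraintStructure_iff.1 hp).2 e he e' he'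

/-- Every digit `u` has a marker in `p` whose reading is `C u` modulo `2 * q * m`. -/
def Displays (p : Finset (Pebble L q m)) (C : Fin (L + 1) → ℕ) : Prop :=
  ∀ u, ∃ e ∈ p, ∃ d, reading e = some (u, d) ∧ d ≡ C u [MOD 2 * q * m]

/-- In the counter state `C` digit `u` may advance: digit `u - 1`, if there is one, reads
`q * m * (C u + 1)`. -/
def Ready (q m : ℕ) (C : Fin (L + 1) → ℕ) (u : Fin (L + 1)) : Prop :=
  ∀ j : Fin (L + 1), j.val + 1 = u → C j ≡ q * m * (C u + 1) [MOD 2 * q * m]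

/-- Only the parity of `l` matters modulo `2 * q * m`. -/
theorem mul_modEq_mul_of_modEq {l c : ℕ} (h : l ≡ c [MOD 2 * q]) :
    q * m * l ≡ q * m * c [MOD 2 * q * m] := by
  have := Nat.ModEq.mul_left' (q * m) (h.of_mul_right q)
  rwa [show q * m * 2 = 2 * q * m by ring] at this

section Spoiler

/-- Spoiler wins with `L + 2` pebbles from every position that displays `C`. -/
def CounterWins (q m : ℕ) (C : Fin (L + 1) → ℕ) : Prop :=
  ∀ p : Finset (Pebble L q m), Displays p C →
    SpoilerWins (source L q) (target L q m) (L + 2) p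

variable {p : Finset (Pebble L q m)} {C : Fin (L + 1) → ℕ} {u : Fin (L + 1)}

theorem exists_reading_of_ready [NeZero q] (hp : Consistent p) (hD : Displays p C)
    (hr : Ready q m C u) {b : Val L m} (hb : (.count u (Fin.ofNat (2 * q) (C u + 1)), b) ∈ p) :
    (∃ d, reading (.count u (Fin.ofNat (2 * q) (C u + 1)), b) = some (u, d) ∧
      d ≡ C u + 1 [MOD 2 * q * m]) ∧ ¬ (u = Fin.last L ∧ 2 * q * m ∣ C u + 1) := by
  have hl : (Fin.ofNat (2 * q) (C u + 1) : ℕ) ≡ C u + 1 [MOD 2 * q] := Nat.mod_modEq _ _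
  cases b with
  | bit b => exact absurd trivial (hp.not_excludes hb hb)
  | esc j =>
    obtain ⟨e, he, d, hd, hdC⟩ := hD j
    refine absurd ⟨d, hd, ?_, fun hj => ?_⟩ (hp.not_excludes he hb)
    · rintro rfl
      exact hl.trans ((hdC.of_mul_right m).add_right 1).symm
    · exact (hdC.trans (hr j hj)).trans (mul_modEq_mul_of_modEq hl).symm
  | num a =>
    obtain ⟨e, he, d, hd, hdC⟩ := hD u
    have hd1 : d + 1 ≡ C u + 1 [MOD 2 * q * m] := hdC.add_right 1
    have hex := hp.not_excludes he hb
    simp only [Excludes, not_exists, not_and, Classical.not_imp] at hex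
    obtain ⟨hnum, hover⟩ := hex d hd (hl.trans (hd1.of_mul_right m).symm)
    exact ⟨⟨_, rfl, hnum.trans hd1⟩, fun h => hover h.1 ((hd1.dvd_iff dvd_rfl).2 h.2)⟩

theorem CounterWins.of_ready [NeZero q] (hr : Ready q m C u)
    (h : ¬ (u = Fin.last L ∧ 2 * q * m ∣ C u + 1) → CounterWins q m (update C u (C u + 1))) :
    CounterWins q m C := by
  intro p hD
  choose e he d hd hdC using hD
  refine .of_family e he (by simp) (.count u (Fin.ofNat (2 * q) (C u + 1))) ?_
  intro b p' hp' hep hb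
  obtain ⟨⟨d', hd', hd'C⟩, hover⟩ :=
    exists_reading_of_ready hp' (fun i => ⟨e i, hep i, d i, hd i, hdC i⟩) hr hb
  refine h hover p' fun i => ?_
  obtain rfl | hi := eq_or_ne i u
  · exact ⟨_, hb, d', hd', by rwa [update_self]⟩
  · exact ⟨e i, hep i, d i, hd i, by rw [update_of_ne hi]; exact hdC i⟩

theorem CounterWins.of_forall_modEq [NeZero q] [NeZero m] (r : ℕ)
    (advance : ∀ C, (∀ C', Set.EqOn C' C (Set.Ioi u) → C' u = C u + 1 → CounterWins q m C') →
      CounterWins q m C)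
    (h : ∀ C', Set.EqOn C' C (Set.Ioi u) → C' u ≡ r [MOD 2 * q * m] → CounterWins q m C') :
    CounterWins q m C := by
  obtain ⟨δ, hδ⟩ : ∃ δ, C u + δ ≡ r [MOD 2 * q * m] := by
    refine ⟨(2 * q * m - 1) * C u + r, ?_⟩
    have hN : 2 * q * m - 1 + 1 = 2 * q * m := Nat.sub_add_cancel (Nat.pos_of_neZero _)
    rw [show C u + ((2 * q * m - 1) * C u + r) = r + (2 * q * m - 1 + 1) * C u by ring, hN]
    simp [Nat.ModEq]
  induction δ generalizing C with
  | zero => exact h C (Set.eqOn_refl C _) hδ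
  | succ δ ih =>
    refine advance C fun C' hC' hu => ih (fun C'' hC'' => h C'' (hC''.trans hC')) ?_
    rwa [hu, add_assoc, add_comm 1]

theorem CounterWins.of_forall_eq_add_one [NeZero q]
    (h_ready : ∀ C, (∀ C', Set.EqOn C' C (Set.Ici u) → Ready q m C' u → CounterWins q m C') →
      CounterWins q m C)
    (h : ∀ C', Set.EqOn C' C (Set.Ioi u) → C' u = C u + 1 → CounterWins q m C') :
    CounterWins q m C := by
  refine h_ready C fun C' hC' hr => .of_ready hr fun _ => h _ (fun i hi => ?_) ?_
  · rw [update_of_ne (ne_of_gt hi), hC' (Set.mem_Ici.2 (le_of_lt hi))]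
  · rw [update_self, hC' Set.self_mem_Ici]

/-- Digit `u` becomes ready after counting with the lower digits only, hence without touching the
digits `≥ u`. -/
theorem CounterWins.of_forall_ready [NeZero q] [NeZero m] (u : Fin (L + 1)) :
    ∀ C, (∀ C', Set.EqOn C' C (Set.Ici u) → Ready q m C' u → CounterWins q m C') →
      CounterWins q m C := by
  induction u using Fin.induction with
  | zero => exact fun C h => h C (Set.eqOn_refl C _) fun j hj => absurd hj (Nat.succ_ne_zero _)
  | succ v ih =>
    refine fun C h => .of_forall_modEq (u := v.castSucc) (q * m * (C v.succ + 1))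
      (fun C => .of_forall_eq_add_one ih) fun C' hC' hr => ?_
    have hC'' : Set.EqOn C' C (Set.Ici v.succ) :=
      hC'.mono fun i hi => (Fin.castSucc_lt_succ).trans_le hi
    refine h C' hC'' fun j hj => ?_
    obtain rfl : j = v.castSucc := Fin.ext (by simpa using hj)
    rwa [hC'' Set.self_mem_Ici]

/-- The leading digit is counted up to the largest residue, and its next advance overflows. -/
theorem counterWins [NeZero q] [NeZero m] (C : Fin (L + 1) → ℕ) : CounterWins q m C := by
  refine .of_forall_modEq (u := Fin.last L) (2 * q * m - 1)
    (fun C => .of_forall_eq_add_one (.of_forall_ready _)) fun C' _ hC' => ?_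
  refine .of_forall_ready (Fin.last L) C' fun C'' hC'' hr => .of_ready hr fun hover => ?_
  refine absurd ⟨rfl, Nat.modEq_zero_iff_dvd.1 ?_⟩ hover
  rw [hC'' Set.self_mem_Ici]
  refine (hC'.add_right 1).trans ?_
  rw [Nat.sub_add_cancel (Nat.pos_of_neZero _)]
  exact Nat.mod_self _

theorem spoilerWins_of_seed_or_zero_mem [NeZero q] [NeZero m] {σ : Fin (L + 1) → Bool}
    (I : Finset (Fin (L + 1))) (hseed : ∀ i ∈ I, (.seed i, .bit (σ i)) ∈ p)
    (hzero : ∀ i ∉ I, (.zero i σ, .bit true) ∈ p) :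
    SpoilerWins (source L q) (target L q m) (L + 2) p := by
  induction I using Finset.induction generalizing p with
  | empty => exact counterWins 0 p fun u => ⟨_, hzero u (by simp), 0, rfl, rfl⟩
  | @insert a I _ ih =>
    have hmarker : ∀ i, ∃ e ∈ p, (i ∈ insert a I ∧ e = (.seed i, .bit (σ i))) ∨
        (i ∉ insert a I ∧ e = (.zero i σ, .bit true)) := fun i => by
      by_cases hi : i ∈ insert a I
      exacts [⟨_, hseed i hi, .inl ⟨hi, rfl⟩⟩, ⟨_, hzero i hi, .inr ⟨hi, rfl⟩⟩]
    choose e he hcase using hmarker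
    refine .of_family e he (by simp) (.zero a σ) fun b p' (hp' : Consistent p') hep hb => ?_
    have hb_true : b = .bit true := by
      have hself := hp'.not_excludes hb hb
      cases b with
      | bit b => simpa [Excludes] using hself
      | esc i =>
        exact absurd ((hcase i).imp And.right And.right)
          (hp'.not_excludes (hep i) hb)
      | num a => exact absurd trivial hself
    subst hb_true
    refine ih (fun i hi => ?_) fun i hi => ?_
    · obtain ⟨-, h⟩ | ⟨h, -⟩ := hcase i
      · exact h ▸ hep i
      · exact absurd (Finset.mem_insert_of_mem hi) h
    · obtain rfl | hia := eq_or_ne i a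
      · exact hb
      obtain ⟨h, -⟩ | ⟨-, h⟩ := hcase i
      · exact absurd h (by simp [hi, hia])
      · exact h ▸ hep i

theorem spoilerWins_of_seed_mem [NeZero q] [NeZero m] (I : Finset (Fin (L + 1)))
    {σ : Fin (L + 1) → Bool} (hseed : ∀ i ∉ I, (.seed i, .bit (σ i)) ∈ p) :
    SpoilerWins (source L q) (target L q m) (L + 2) p := by
  induction I using Finset.induction generalizing p σ with
  | empty => exact spoilerWins_of_seed_or_zero_mem .univ (fun i _ => hseed i (by simp)) (by simp)
  | @insert a I _ ih =>
    refine .of_family (fun i : {i // i ∉ insert a I} => (.seed i, .bit (σ i)))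
      (fun i => hseed i i.2) ?_ (.seed a) fun b p' (hp' : Consistent p') hep hb => ?_
    · exact (Fintype.card_subtype_le _).trans_lt (by simp)
    cases b with
    | bit b =>
      refine ih (σ := update σ a b) fun i hi => ?_
      obtain rfl | hia := eq_or_ne i a
      · rwa [update_self]
      · rw [update_of_ne hia]
        exact hep ⟨i, by simp [hi, hia]⟩
    | esc j => exact absurd trivial (hp'.not_excludes hb hb)
    | num a => exact absurd trivial (hp'.not_excludes hb hb)

theorem spoilerWins [NeZero q] [NeZero m] :
    SpoilerWins (source L q) (target L q m) (L + 2) ∅ :=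
  spoilerWins_of_seed_mem .univ (σ := fun _ => true) (by simp)

end Spoiler

section Duplicator

/-- A property of Duplicator's counter states, whose digits are integers not reduced modulo
`2 * q * m`: each advance of digit `j + 1` has been paid for by `q * m` advances of digit `j`. -/
def Carries (q m : ℕ) (C : Fin (L + 1) → ℕ) : Prop :=
  ∀ j u : Fin (L + 1), j.val + 1 = u → q * m * C u ≤ C j

variable {p p' : Finset (Pebble L q m)} {C : Fin (L + 1) → ℕ} {u : Fin (L + 1)} {t t' : ℕ}

/-- The digit `j` below `u` has already paid for the advance: `q * m * C u ≤ C j` and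
`C j ≡ q * m * (C u + 1)` modulo `2 * q * m` force `q * m * (C u + 1) ≤ C j`. -/
theorem Carries.update (hC : Carries q m C) (hr : Ready q m C u) :
    Carries q m (update C u (C u + 1)) := by
  intro j v hjv
  have hne : j ≠ v := by
    rintro rfl
    omega
  obtain rfl | hv := eq_or_ne v u
  · rw [update_self, update_of_ne hne]
    by_contra! hlt
    have := (hr j hjv).add_le_of_lt hlt
    nlinarith [hC j v hjv]
  · rw [update_of_ne hv]
    refine (hC j v hjv).trans ?_
    obtain rfl | hj := eq_or_ne j u
    · simp
    · rw [update_of_ne hj]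

theorem Carries.pow_mul_le (hC : Carries q m C) (u : Fin (L + 1)) :
    (q * m) ^ u.val * C u ≤ C 0 := by
  induction u using Fin.induction with
  | zero => simp
  | succ v ih =>
    calc (q * m) ^ (v.val + 1) * C v.succ = (q * m) ^ v.val * (q * m * C v.succ) := by ring
      _ ≤ (q * m) ^ v.val * C v.castSucc := Nat.mul_le_mul_left _ (hC _ _ (by simp))
      _ ≤ C 0 := ih

theorem Carries.not_dvd_last (hC : Carries q m C) (hlt : C 0 < (q * m) ^ L * (2 * q * m))
    (hpos : 0 < C (Fin.last L)) : ¬ 2 * q * m ∣ C (Fin.last L) := fun hdvd =>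
  hlt.not_ge ((Nat.mul_le_mul_left _ (Nat.le_of_dvd hpos hdvd)).trans (hC.pow_mul_le (Fin.last L)))

/-- The assignment `τ` of bits to the seeds respects a pebble pair: it agrees with a bit shown on a
seed, and it justifies an escape from `zero u σ` that blames digit `i`. -/
def Respects (τ : Fin (L + 1) → Bool) : Pebble L q m → Prop
  | (.seed i, .bit b) => τ i = b
  | (.zero _ σ, .esc i) => τ i ≠ σ i
  | _ => True

/-- The digit to which a pebble pair on a variable `seed` or `zero` belongs: the only digit of an
assignment on which `Respects` depends, or else the digit that the pair shows to be `0`. -/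
def seedTag : Pebble L q m → Option (Fin (L + 1))
  | (.seed i, _) => some i
  | (.zero _ _, .esc i) => some i
  | (.zero u _, _) => some u
  | (.count _ _, _) => none

theorem respects_update_iff {τ : Fin (L + 1) → Bool} {i : Fin (L + 1)} {b : Bool}
    {e : Pebble L q m} (he : seedTag e ≠ some i) :
    Respects (update τ i b) e ↔ Respects τ e := by
  obtain ⟨_ | _ | _, _ | _ | _⟩ := e <;> simp_all [Respects, seedTag, update_of_ne]

theorem reading_eq_zero_of_seedTag_ne_none {e : Pebble L q m} (he : seedTag e ≠ none) {d : ℕ}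
    (hd : reading e = some (u, d)) : d = 0 := by
  obtain ⟨_ | _ | _, _ | _ | _⟩ := e <;> simp_all [reading, seedTag]

/-- The invariant by which Duplicator survives `t` rounds within the first
`(q * m) ^ L * (2 * q * m)` rounds: some assignment to the seeds is compatible with the board, and
each counter state on display, given modulo `2 * q * m`, has a representative in the integers with
all its carries accounted for whose digit `0` is at most the number of rounds played. -/
structure Safe (t : ℕ) (p : Finset (Pebble L q m)) : Prop where
  consistent : Consistent p
  exists_respects : ∃ τ, ∀ e ∈ p, Respects τ e
  exists_carries : ∀ D, Displays p D → ∃ C, (∀ u, C u ≡ D u [MOD 2 * q * m]) ∧ Carries q m C ∧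
    C 0 + t < (q * m) ^ L * (2 * q * m)
  time : t < (q * m) ^ L * (2 * q * m)

theorem Displays.mono {D : Fin (L + 1) → ℕ} (h : Displays p' D) (hs : p' ⊆ p) : Displays p D :=
  fun u => (h u).imp fun _ he => ⟨hs he.1, he.2⟩

theorem Safe.mono (h : Safe t p) (hs : p' ⊆ p) (ht : t' ≤ t) : Safe t' p' where
  consistent := h.consistent.mono hs
  exists_respects := h.exists_respects.imp fun _ hτ e he => hτ e (hs he)
  exists_carries D hD := by
    obtain ⟨C, hCD, hC, hlt⟩ := h.exists_carries D (hD.mono hs)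
    exact ⟨C, hCD, hC, by omega⟩
  time := ht.trans_lt h.time

theorem safe_empty (ht : t < (q * m) ^ L * (2 * q * m)) : Safe t (∅ : Finset (Pebble L q m)) where
  consistent := partialHom_constraintStructure_iff.2 ⟨by simp [Functional], by simp⟩
  exists_respects := ⟨fun _ => true, by simp⟩
  exists_carries D hD := by simpa using hD 0
  time := ht

theorem Safe.insert_of_reading_eq_none {e : Pebble L q m} (h : Safe t p)
    (hcons : Consistent (insert e p)) (hseeds : ∃ τ, ∀ e' ∈ insert e p, Respects τ e')
    (he : reading e = none) : Safe t (insert e p) where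
  consistent := hcons
  exists_respects := hseeds
  exists_carries D hD := h.exists_carries D fun u => by
    obtain ⟨e', he', d, hd, hdD⟩ := hD u
    obtain rfl | he' := Finset.mem_insert.1 he'
    · simp [he] at hd
    · exact ⟨e', he', d, hd, hdD⟩
  time := h.time

theorem exists_esc_of_excludes {e e' : Pebble L q m} (he : reading e = none)
    (he' : ¬ Excludes e' e') (h : Excludes e e') :
    ∃ u σ i, e' = (.zero u σ, .esc i) ∧ e = (.seed i, .bit (σ i)) := by
  obtain ⟨_ | ⟨u, σ⟩ | _, _ | i | _⟩ := e'
  case zero.esc =>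
    obtain h | rfl := h
    · exact ⟨u, σ, i, rfl, h⟩
    · cases he
  all_goals simp_all [Excludes]

theorem Safe.exists_insert_seed (h : Safe t p) {i : Fin (L + 1)} (hx : ∀ b, (.seed i, b) ∉ p) :
    ∃ b, Safe t (insert (.seed i, b) p) := by
  obtain ⟨τ, hτ⟩ := h.exists_respects
  refine ⟨.bit (τ i), h.insert_of_reading_eq_none ?_ ⟨τ, ?_⟩ rfl⟩
  · refine partialHom_constraintStructure_insert h.consistent hx id fun e he => ⟨fun hex => ?_, id⟩
    obtain ⟨u, σ, j, rfl, hj⟩ :=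
      exists_esc_of_excludes rfl (h.consistent.not_excludes he he) hex
    obtain ⟨rfl, hσ⟩ : i = j ∧ τ i = σ j := by simpa using hj
    exact hτ _ he hσ
  · exact (Finset.forall_mem_insert ..).2 ⟨rfl, hτ⟩

theorem seedTag_ne_none_of_forall_eq {τ : Fin (L + 1) → Bool} (hp : p.card ≤ L + 1)
    (hτ : ∀ e ∈ p, Respects τ e) {σ : Fin (L + 1) → Bool}
    (hσ : ∀ i, (.zero i σ, .bit true) ∉ p → ∀ τ', (∀ e ∈ p, Respects τ' e) → τ' i = σ i) :
    ∀ e ∈ p, seedTag e ≠ none := by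
  refine (injOn_and_ne_none_of_card_le (κ := Fin (L + 1)) (by simpa) fun i => ?_).2
  by_contra! htag
  have hi : (.zero i σ, .bit true) ∉ p := fun hmem => htag _ hmem rfl
  have hflip := hσ i hi (update τ i !τ i) fun e he =>
    (respects_update_iff (htag e he)).2 (hτ e he)
  rw [update_self, ← hσ i hi τ hτ] at hflip
  simp at hflip

section Zero

variable {σ : Fin (L + 1) → Bool}

theorem Safe.insert_zero_esc (h : Safe t p) (hx : ∀ b, (.zero u σ, b) ∉ p) {i : Fin (L + 1)}
    (hi : (.zero i σ, .bit true) ∉ p) {τ : Fin (L + 1) → Bool} (hτ : ∀ e ∈ p, Respects τ e)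
    (hne : τ i ≠ σ i) : Safe t (insert (.zero u σ, .esc i) p) := by
  refine h.insert_of_reading_eq_none ?_ ⟨τ, (Finset.forall_mem_insert ..).2 ⟨hne, hτ⟩⟩ rfl
  refine partialHom_constraintStructure_insert h.consistent hx (by simp [Excludes])
    fun e he => ⟨fun hex => ?_, ?_⟩
  · obtain ⟨_, _, _, -, hseed⟩ := exists_esc_of_excludes rfl (h.consistent.not_excludes he he) hex
    simp at hseed
  · rintro (rfl | rfl)
    exacts [hne (hτ _ he), hi he]

/-- When no escape is left, every digit is tagged by a pebble, so that no pebble is left for a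
nonzero reading: the counter state is reset to `0`. -/
theorem Safe.insert_zero_bit (h : Safe t p) (hp : p.card ≤ L + 1) (hx : ∀ b, (.zero u σ, b) ∉ p)
    (hσ : ∀ i, (.zero i σ, .bit true) ∉ p → ∀ τ, (∀ e ∈ p, Respects τ e) → τ i = σ i) :
    Safe t (insert (.zero u σ, .bit true) p) := by
  obtain ⟨τ, hτ⟩ := h.exists_respects
  have htag := seedTag_ne_none_of_forall_eq hp hτ hσ
  refine ⟨?_, ⟨τ, (Finset.forall_mem_insert ..).2 ⟨trivial, hτ⟩⟩, fun D hD => ?_, h.time⟩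
  · refine partialHom_constraintStructure_insert h.consistent hx (by simp [Excludes])
      fun e he => ⟨fun hex => ?_, by simp [Excludes]⟩
    have hself := h.consistent.not_excludes he he
    obtain ⟨_ | ⟨v, σ'⟩ | _, _ | i | _⟩ := e
    case zero.esc =>
      obtain ⟨rfl, rfl⟩ : u = i ∧ σ = σ' := by simpa [Excludes] using hex
      exact hτ _ he (hσ u (hx _) τ hτ)
    case count.bit | count.esc | count.num => exact htag _ he rfl
    all_goals exact hself hex
  · refine ⟨0, fun v => ?_, fun _ _ _ => by simp, by simpa using h.time⟩
    obtain ⟨e, he, d, hd, hdD⟩ := hD v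
    obtain rfl : d = 0 := by
      obtain rfl | he := Finset.mem_insert.1 he
      · exact reading_eq_zero_of_seedTag_ne_none (by simp [seedTag]) hd
      · exact reading_eq_zero_of_seedTag_ne_none (htag e he) hd
    exact hdD

theorem Safe.exists_insert_zero (h : Safe t p) (hp : p.card ≤ L + 1)
    (hx : ∀ b, (.zero u σ, b) ∉ p) : ∃ b, Safe t (insert (.zero u σ, b) p) := by
  by_cases hσ : ∀ i, (.zero i σ, .bit true) ∉ p → ∀ τ, (∀ e ∈ p, Respects τ e) → τ i = σ i
  · exact ⟨_, h.insert_zero_bit hp hx hσ⟩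
  · push Not at hσ
    obtain ⟨i, hi, τ, hτ, hne⟩ := hσ
    exact ⟨_, h.insert_zero_esc hx hi hτ hne⟩

end Zero

section Count

variable {l : Fin (2 * q)}

theorem Safe.insert_count_esc (h : Safe t p) {j : Fin (L + 1)} (hx : ∀ b, (.count u l, b) ∉ p)
    (hj : ∀ e ∈ p, ¬ Excludes e (.count u l, .esc j)) : Safe t (insert (.count u l, .esc j) p) := by
  obtain ⟨τ, hτ⟩ := h.exists_respects
  refine h.insert_of_reading_eq_none ?_ ⟨τ, (Finset.forall_mem_insert ..).2 ⟨trivial, hτ⟩⟩ rfl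
  refine partialHom_constraintStructure_insert h.consistent hx (by simp [Excludes, reading])
    fun e he => ⟨fun hex => ?_, hj e he⟩
  obtain ⟨_, _, _, -, hseed⟩ := exists_esc_of_excludes rfl (h.consistent.not_excludes he he) hex
  simp at hseed

/-- The situation in which `e j` forbids Duplicator to answer `esc j` on `count u l`, for every
digit `j`: the digit shown by `e j` reads `d j`. -/
structure Blocked (p : Finset (Pebble L q m)) (u : Fin (L + 1)) (l : Fin (2 * q))
    (e : Fin (L + 1) → Pebble L q m) (d : Fin (L + 1) → ℕ) : Prop where
  mem : ∀ j, e j ∈ p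
  reading_eq : ∀ j, reading (e j) = some (j, d j)
  modEq : l ≡ d u + 1 [MOD 2 * q]
  carry : ∀ j : Fin (L + 1), j.val + 1 = u → d j ≡ q * m * l [MOD 2 * q * m]

theorem exists_blocked (h : ∀ j, ∃ e ∈ p, Excludes e (.count u l, .esc j)) :
    ∃ e d, Blocked p u l e d := by
  choose e he d hd hu hcarry using h
  exact ⟨e, d, he, hd, hu u rfl, hcarry⟩

variable {e : Fin (L + 1) → Pebble L q m} {d : Fin (L + 1) → ℕ}

theorem Blocked.displays (hb : Blocked p u l e d) : Displays p d :=
  fun j => ⟨e j, hb.mem j, d j, hb.reading_eq j, rfl⟩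

theorem Blocked.ready (hb : Blocked p u l e d) (hC : ∀ j, C j ≡ d j [MOD 2 * q * m]) :
    Ready q m C u := fun j hj =>
  ((hC j).trans (hb.carry j hj)).trans
    (mul_modEq_mul_of_modEq (hb.modEq.trans (((hC u).of_mul_right m).add_right 1).symm))

/-- There is no room for further pebbles, so each digit has only one marker. -/
theorem Blocked.exists_eq (hb : Blocked p u l e d) (hp : p.card ≤ L + 1) {e' : Pebble L q m}
    (he' : e' ∈ p) : ∃ j, e' = e j := by
  obtain ⟨hinj, hne⟩ := injOn_and_ne_none_of_card_le (s := p) (κ := Fin (L + 1))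
    (f := fun e => (reading e).map Prod.fst) (by simpa)
    fun j => ⟨e j, hb.mem j, by simp [hb.reading_eq]⟩
  obtain ⟨j, hj⟩ := Option.ne_none_iff_exists'.1 (hne e' he')
  exact ⟨j, hinj he' (hb.mem j) (by simp [hj, hb.reading_eq])⟩

theorem Blocked.eq_of_reading (hb : Blocked p u l e d) (hp : p.card ≤ L + 1) {e' : Pebble L q m}
    (he' : e' ∈ p) {j : Fin (L + 1)} {d' : ℕ} (hd' : reading e' = some (j, d')) : d' = d j := by
  obtain ⟨i, rfl⟩ := hb.exists_eq hp he'
  obtain ⟨rfl, rfl⟩ : i = j ∧ d i = d' := by simpa [hb.reading_eq] using hd'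
  rfl

theorem not_excludes_count_num_self (hq : 2 ≤ q) {a : Fin m} :
    ¬ Excludes (.count u l, .num a) (.count u l, .num a) := by
  rintro ⟨d', hd', hmod, -⟩
  obtain rfl : 2 * q * a + l = d' := by simpa [reading] using hd'
  have hsucc : l + 1 ≡ l [MOD 2 * q] :=
    ((Nat.modulus_mul_add_modEq_iff.2 rfl).add_right 1).symm.trans hmod.symm
  exact Nat.not_dvd_of_pos_of_lt one_pos (by omega) (Nat.add_modEq_left_iff.1 hsucc)

/-- A marker of digit `u` cannot be excluded by the next one, as the residues modulo `2 * q` would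
increase by `2`. -/
theorem Blocked.not_excludes_num (hb : Blocked p u l e d) (hp : p.card ≤ L + 1) (hq : 2 ≤ q)
    (hcons : Consistent p) {a : Fin m} (ha : 2 * q * a + l ≡ d u + 1 [MOD 2 * q])
    {e' : Pebble L q m} (he' : e' ∈ p) : ¬ Excludes (.count u l, .num a) e' := by
  have hself := hcons.not_excludes he' he'
  obtain ⟨j, hj⟩ := hb.exists_eq hp he'
  have hread : reading e' = some (j, d j) := hj ▸ hb.reading_eq j
  obtain ⟨_ | _ | ⟨v, l'⟩, _ | _ | a'⟩ := e'
  case count.num =>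
    rintro ⟨d', hd', hmod, -⟩
    obtain ⟨rfl, rfl⟩ : u = v ∧ 2 * q * a + l = d' := by simpa [reading] using hd'
    have hdu : 2 * q * a' + l' = d u := hb.eq_of_reading hp he' rfl
    have hsucc : d u + 2 ≡ d u [MOD 2 * q] := by
      calc d u + 1 + 1 ≡ 2 * q * a + l + 1 [MOD 2 * q] := ha.symm.add_right 1
        _ ≡ l' [MOD 2 * q] := hmod.symm
        _ ≡ 2 * q * a' + l' [MOD 2 * q] := Nat.modulus_mul_add_modEq_iff.2 rfl |>.symm
        _ = d u := hdu
    exact Nat.not_dvd_of_pos_of_lt two_pos (by omega) (Nat.add_modEq_left_iff.1 hsucc)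
  case zero.bit => exact hself
  all_goals simp [reading] at hread

theorem Blocked.consistent_insert (hb : Blocked p u l e d) (hp : p.card ≤ L + 1) (hq : 2 ≤ q)
    (hcons : Consistent p) (hx : ∀ b, (.count u l, b) ∉ p) {a : Fin m}
    (ha : 2 * q * a + l ≡ d u + 1 [MOD 2 * q * m])
    (hover : ¬ (u = Fin.last L ∧ 2 * q * m ∣ d u + 1)) :
    Consistent (insert (.count u l, .num a) p) := by
  refine partialHom_constraintStructure_insert hcons hx (not_excludes_count_num_self hq)
    fun e' he' => ⟨hb.not_excludes_num hp hq hcons (ha.of_mul_right m) he', ?_⟩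
  rintro ⟨d', hd', -, himp⟩
  obtain rfl := hb.eq_of_reading hp he' hd'
  exact hover (himp ha)

theorem Blocked.modEq_or_of_displays_insert (hb : Blocked p u l e d) (hp : p.card ≤ L + 1)
    {a : Fin m} (ha : 2 * q * a + l ≡ d u + 1 [MOD 2 * q * m]) {D : Fin (L + 1) → ℕ}
    (hD : Displays (insert (.count u l, .num a) p) D) :
    (∀ j, d j ≡ D j [MOD 2 * q * m]) ∨ ∀ j, update d u (d u + 1) j ≡ D j [MOD 2 * q * m] := by
  have hdigit : ∀ j, d j ≡ D j [MOD 2 * q * m] ∨ j = u ∧ d u + 1 ≡ D u [MOD 2 * q * m] := by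
    intro j
    obtain ⟨e', he', d', hd', hdD⟩ := hD j
    obtain rfl | he' := Finset.mem_insert.1 he'
    · obtain ⟨rfl, rfl⟩ : u = j ∧ 2 * q * a + l = d' := by simpa [reading] using hd'
      exact .inr ⟨rfl, ha.symm.trans hdD⟩
    · exact .inl (hb.eq_of_reading hp he' hd' ▸ hdD)
  obtain hu | ⟨-, hu⟩ := hdigit u
  · exact .inl fun j => (hdigit j).elim id fun h => h.1 ▸ hu
  · refine .inr fun j => ?_
    obtain rfl | hj := eq_or_ne j u
    · rwa [update_self]
    · rw [update_of_ne hj]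
      exact (hdigit j).resolve_right fun h => hj h.1

theorem Safe.insert_count_num (h : Safe (t + 1) p) (hb : Blocked p u l e d) (hp : p.card ≤ L + 1)
    (hq : 2 ≤ q) (hx : ∀ b, (.count u l, b) ∉ p) {a : Fin m}
    (ha : 2 * q * a + l ≡ d u + 1 [MOD 2 * q * m]) :
    Safe t (insert (.count u l, .num a) p) := by
  obtain ⟨C, hCd, hC, hlt⟩ := h.exists_carries d hb.displays
  have hC' := hC.update (hb.ready hCd)
  have hlt' : update C u (C u + 1) 0 + t < (q * m) ^ L * (2 * q * m) := by
    obtain rfl | hu := eq_or_ne u 0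
    · rw [update_self]
      omega
    · rw [update_of_ne hu.symm]
      omega
  have hover : ¬ (u = Fin.last L ∧ 2 * q * m ∣ d u + 1) := by
    rintro ⟨rfl, hdvd⟩
    refine hC'.not_dvd_last (Nat.lt_of_add_right_lt hlt') (by simp) ?_
    rw [update_self]
    exact (((hCd _).add_right 1).dvd_iff dvd_rfl).2 hdvd
  obtain ⟨τ, hτ⟩ := h.exists_respects
  refine ⟨hb.consistent_insert hp hq h.consistent hx ha hover,
    ⟨τ, (Finset.forall_mem_insert ..).2 ⟨trivial, hτ⟩⟩, fun D hD => ?_, Nat.lt_of_succ_lt h.time⟩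
  obtain hdD | hdD := hb.modEq_or_of_displays_insert hp ha hD
  · exact ⟨C, fun j => (hCd j).trans (hdD j), hC, by omega⟩
  · refine ⟨_, fun j => .trans ?_ (hdD j), hC', hlt'⟩
    obtain rfl | hj := eq_or_ne j u
    · simpa only [update_self] using (hCd j).add_right 1
    · simpa only [update_of_ne hj] using hCd j

theorem Safe.exists_insert_count [NeZero m] (h : Safe (t + 1) p) (hq : 2 ≤ q)
    (hp : p.card ≤ L + 1) (hx : ∀ b, (.count u l, b) ∉ p) :
    ∃ b, Safe t (insert (.count u l, b) p) := by
  by_cases hblocked : ∀ j, ∃ e ∈ p, Excludes e (.count u l, .esc j)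
  · obtain ⟨e, d, hb⟩ := exists_blocked hblocked
    obtain ⟨a, ha⟩ := exists_mul_add_modEq (m := m) l.isLt hb.modEq
    exact ⟨_, h.insert_count_num hb hp hq hx ha⟩
  · push Not at hblocked
    obtain ⟨j, hj⟩ := hblocked
    exact ⟨_, (h.mono subset_rfl (Nat.le_succ t)).insert_count_esc hx hj⟩

end Count

theorem Safe.exists_insert [NeZero m] (h : Safe (t + 1) p) (hq : 2 ≤ q) (hs : p' ⊆ p)
    (hp' : p'.card < L + 2) (x : Var L q) : ∃ b, Safe t (insert (x, b) p') := by
  have h' := h.mono hs le_rfl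
  have h'' := h.mono hs (Nat.le_succ t)
  by_cases hx : ∃ b, (x, b) ∈ p'
  · obtain ⟨b, hb⟩ := hx
    exact ⟨b, by rwa [Finset.insert_eq_of_mem hb]⟩
  · push Not at hx
    cases x with
    | seed i => exact h''.exists_insert_seed hx
    | zero u σ => exact h''.exists_insert_zero (Nat.le_of_lt_succ hp') hx
    | count u l => exact h'.exists_insert_count hq (Nat.le_of_lt_succ hp') hx

theorem not_spoilerWin [NeZero m] (hq : 2 ≤ q) (ht : t < (q * m) ^ L * (2 * q * m)) :
    ¬ SpoilerWin (source L q) (target L q m) (L + 2) ∅ t :=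
  not_spoilerWin_of_safe (Safe := Safe) Safe.consistent
    (fun x h hs hk => h.exists_insert hq hs hk x) (safe_empty ht)

end Duplicator

theorem exists_binary_structures [NeZero m] (hq : 2 ≤ q) {n n' : ℕ}
    (hn : Fintype.card (Var L q) ≤ n) (hn' : Fintype.card (Val L m) ≤ n') :
    ∃ (ι : Type) (_ : Fintype ι) (A : RelStruct ι (Fin n)) (B : RelStruct ι (Fin n')),
      Binary A ∧ Binary B ∧ SpoilerWins A B (L + 2) ∅ ∧
        ∀ t < (q * m) ^ L * (2 * q * m), ¬ SpoilerWin A B (L + 2) ∅ t := by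
  have : NeZero q := ⟨by omega⟩
  obtain ⟨f, hf⟩ : ∃ f : Fin n → Var L q, Surjective f :=
    exists_surjective_iff.2 ⟨⟨fun _ => .seed 0⟩, Embedding.nonempty_of_card_le (by simpa)⟩
  obtain ⟨g, hg⟩ : ∃ g : Fin n' → Val L m, Surjective g :=
    exists_surjective_iff.2 ⟨⟨fun _ => .esc 0⟩, Embedding.nonempty_of_card_le (by simpa)⟩
  have hiff {t : ℕ} := spoilerWin_comap_iff (A := source L q) (B := target L q m) (k := L + 2)
    (d := t) constraintStructure_separates hf hg
  exact ⟨_, inferInstance, (source L q).comap f, (target L q m).comap g, binary_allPairs.comap f,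
    (binary_constraintStructure _).comap g, spoilerWins.imp fun _ => hiff.2,
    fun t ht h => not_spoilerWin hq ht (hiff.1 h)⟩

end CounterGame

end CSP

/-- With `4 * K * q` between `n / 2` and `n`, the `count` variables use at most half of the `n`
elements. -/
theorem exists_digit_size {K c n : ℕ} (hK : 0 < K) (hn : 8 * K + 2 * c ≤ n) :
    ∃ q, 2 ≤ q ∧ c + K * (2 * q) ≤ n ∧ n ≤ 8 * K * q := by
  have hq : 2 ≤ n / (4 * K) := (Nat.le_div_iff_mul_le (by omega)).2 (by omega)
  have hle : n / (4 * K) * (4 * K) ≤ n := Nat.div_mul_le_self _ _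
  have hlt : n < (n / (4 * K) + 1) * (4 * K) := Nat.lt_mul_of_div_lt (Nat.lt_succ_self _) (by omega)
  exact ⟨n / (4 * K), hq, by linarith, by nlinarith⟩

theorem lt_pow_mul_of_lt_const_mul_pow {L n m q r d : ℕ} (hn : n ≤ 8 * (L + 1) * q)
    (hm : m ≤ 2 * r)
    (hd : (d : ℝ) < (1 / (16 * (L + 1))) ^ (L + 1) * n ^ (L + 1) * m ^ (L + 1)) :
    d < (q * r) ^ L * (2 * q * r) := by
  have hnm : (n : ℝ) * m ≤ (8 * (L + 1) * q) * (2 * r) :=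
    mul_le_mul (by exact_mod_cast hn) (by exact_mod_cast hm) (by positivity) (by positivity)
  have hbase : 1 / (16 * (L + 1)) * (n : ℝ) * m ≤ q * r := by
    rw [mul_assoc, one_div, inv_mul_le_iff₀ (by positivity)]
    linarith
  have hpow : d < (q * r) ^ (L + 1) := by
    rw [← mul_pow, ← mul_pow] at hd
    exact_mod_cast hd.trans_le (pow_le_pow_left₀ (by positivity) hbase _)
  calc d < (q * r) ^ L * (q * r) := hpow
    _ ≤ (q * r) ^ L * (2 * q * r) := Nat.mul_le_mul_left _ (by linarith [Nat.zero_le (q * r)])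

/-- for every `k ≥ 2` there are `ε > 0` and `n₀, m₀ ≥ 1` such that for all
`n ≥ n₀`, `m ≥ m₀` there are binary relational structures `A` (with `n` elements) and
`B` (with `m` elements) over a common finite vocabulary such that Spoiler has a winning
strategy in the existential `k`-pebble game on `A` and `B`, but no strategy winning
within fewer than `ε · n^(k-1) · m^(k-1)` rounds. -/
theorem pebble_game_round_lower_bound (k : ℕ) (hk : 2 ≤ k) :
    ∃ ε : ℝ, 0 < ε ∧ ∃ n₀ m₀ : ℕ, 0 < n₀ ∧ 0 < m₀ ∧
      ∀ n m : ℕ, n₀ ≤ n → m₀ ≤ m →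
        ∃ (ι : Type) (_ : Fintype ι) (A : RelStruct ι (Fin n)) (B : RelStruct ι (Fin m)),
          CSP.Binary A ∧ CSP.Binary B ∧
          (∃ d, CSP.SpoilerWin A B k (∅ : Finset (Fin n × Fin m)) d) ∧
          ∀ d : ℕ, (d : ℝ) < ε * (n : ℝ) ^ (k - 1) * (m : ℝ) ^ (k - 1) →
            ¬ CSP.SpoilerWin A B k (∅ : Finset (Fin n × Fin m)) d := by
  obtain ⟨L, rfl⟩ : ∃ L, k = L + 2 := ⟨k - 2, by omega⟩
  refine ⟨(1 / (16 * (L + 1))) ^ (L + 1), by positivity,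
    8 * (L + 1) + 2 * ((L + 1) + (L + 1) * 2 ^ (L + 1)), 2 * (L + 3), by omega, by omega,
    fun n m hn hm => ?_⟩
  obtain ⟨q, hq, hcard, hnq⟩ := exists_digit_size (Nat.succ_pos L) hn
  obtain ⟨r, rfl⟩ : ∃ r, m = r + (L + 3) := ⟨m - (L + 3), by omega⟩
  have : NeZero r := ⟨by omega⟩
  obtain ⟨ι, hι, A, B, hA, hB, hwin, hlose⟩ :=
    CSP.CounterGame.exists_binary_structures (m := r) (n' := r + (L + 3)) hq
      (CSP.CounterGame.card_var_le.trans hcard) (CSP.CounterGame.card_val_le.trans (by omega))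
  exact ⟨ι, hι, A, B, hA, hB, hwin, fun d hd =>
    hlose d (lt_pow_mul_of_lt_const_mul_pow hnq (by omega) hd)⟩
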